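/- Let x_1,…,x_n be independent uniformly distributed random points in the unit square Q = [0,1]² ⊂ ℝ². Fix r > 0 and ε with 0 < ε < 1, and set b := ⌈√2 / r⌉. If n ≥ b² · log( b² / ε ), then with probability at least 1 − ε every point of the unit square is within distance r of some x_i, i.e., for every p ∈ [0,1]² there exists i ∈ {1,…,n} with ‖p − x_i‖₂ ≤ r. -/

import Mathlib

open MeasureTheory

/-- The closed unit square `[0,1]² ⊂ ℝ²` (with the Euclidean norm). -/
def unitSquare : Set (EuclideanSpace ℝ (Fin 2)) :=
  {p | ∀ i, p i ∈ Set.Icc (0 : ℝ) 1}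

/-- The uniform probability measure on the unit square. -/
noncomputable def unifSquare : Measure (EuclideanSpace ℝ (Fin 2)) :=
  volume.restrict unitSquare

/-!
Cut the unit cube of dimension `d` into `b ^ d` cells of side `1 / b`, with `b = ⌈√d / r⌉`, so that
every cell has diameter at most `r`. A sample that hits every cell is then an `r`-net of the cube.
A given cell is missed by all `n` points with probability `(1 - b⁻ᵈ) ^ n ≤ exp (-n / bᵈ)`, and
summing over the `b ^ d` cells gives at most `ε` as soon as `n ≥ b ^ d * log (b ^ d / ε)`.
-/

theorem mul_exp_neg_le_of_log_div_le {K ε t : ℝ} (hε : 0 < ε) (h : Real.log (K / ε) ≤ t) :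
    K * Real.exp (-t) ≤ ε := by
  have hK : K / ε ≤ Real.exp t := (Real.le_exp_log _).trans (Real.exp_le_exp.2 h)
  rw [Real.exp_neg, ← div_eq_mul_inv, div_le_iff₀ (Real.exp_pos t), mul_comm]
  exact (div_le_iff₀ hε).1 hK

theorem exists_fin_mem_Icc_div {b : ℕ} (hb : 0 < b) {t : ℝ} (ht : t ∈ Set.Icc (0 : ℝ) 1) :
    ∃ k : Fin b, t ∈ Set.Icc ((k : ℝ) / b) ((k + 1) / b) := by
  have hb' : (0 : ℝ) < b := Nat.cast_pos.2 hb
  have htb : 0 ≤ t * b := mul_nonneg ht.1 hb'.le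
  have hceil : ⌈t * b⌉₊ ≤ b := Nat.ceil_le.2 (mul_le_of_le_one_left hb'.le ht.2)
  refine ⟨⟨⌈t * b⌉₊ - 1, by lia⟩, ?_, ?_⟩
  · rw [div_le_iff₀ hb', ← Nat.le_floor_iff htb]
    exact tsub_le_iff_right.2 (Nat.ceil_le_floor_add_one _)
  · rw [le_div_iff₀ hb', ← Nat.cast_add_one, ← Nat.ceil_le]
    exact le_tsub_add

section Sampling

variable {σ κ : Type*} [Fintype σ] [Fintype κ]

theorem one_sub_sum_prod_le_measureReal_pi_forall_exists_mem {Ω : σ → Type*}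
    [∀ i, MeasurableSpace (Ω i)] (μ : ∀ i, Measure (Ω i)) [∀ i, IsProbabilityMeasure (μ i)]
    {C : κ → ∀ i, Set (Ω i)} (hC : ∀ k i, NullMeasurableSet (C k i) (μ i)) :
    1 - ∑ k, ∏ i, (1 - (μ i).real (C k i)) ≤
      (Measure.pi μ).real {x | ∀ k, ∃ i, x i ∈ C k i} := by
  let missed (k : κ) : Set (∀ i, Ω i) := Set.univ.pi fun i => (C k i)ᶜ
  have hit_eq : {x | ∀ k, ∃ i, x i ∈ C k i} = (⋃ k, missed k)ᶜ := by
    ext x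
    simp [missed]
  have real_missed (k : κ) : (Measure.pi μ).real (missed k) = ∏ i, (1 - (μ i).real (C k i)) := by
    simp only [missed, measureReal_def, Measure.pi_pi, ENNReal.toReal_prod]
    exact Finset.prod_congr rfl fun i _ => probReal_compl_eq_one_sub₀ (hC k i)
  have missed_le : (Measure.pi μ).real (⋃ k, missed k) ≤ ∑ k, ∏ i, (1 - (μ i).real (C k i)) :=
    (measureReal_iUnion_fintype_le _).trans_eq (Finset.sum_congr rfl fun k _ => real_missed k)
  have one_le : 1 ≤ (Measure.pi μ).real (⋃ k, missed k) +
      (Measure.pi μ).real (⋃ k, missed k)ᶜ := by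
    simpa only [Set.union_compl_self, probReal_univ] using
      measureReal_union_le (μ := Measure.pi μ) (⋃ k, missed k) (⋃ k, missed k)ᶜ
  rw [hit_eq]
  linarith

theorem one_sub_le_measureReal_pi_forall_exists_mem {Ω : Type*} [MeasurableSpace Ω]
    (μ : Measure Ω) [IsProbabilityMeasure μ] {C : κ → Set Ω}
    (hC : ∀ k, NullMeasurableSet (C k) μ) {δ ε : ℝ} (hδ : ∀ k, δ ≤ μ.real (C k)) (hε : 0 < ε)
    (hσ : Real.log (Fintype.card κ / ε) ≤ Fintype.card σ * δ) :
    1 - ε ≤ (Measure.pi fun _ : σ => μ).real {x | ∀ k, ∃ i, x i ∈ C k} := by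
  have miss_le (k : κ) : 1 - μ.real (C k) ≤ Real.exp (-δ) :=
    (sub_le_sub_left (hδ k) 1).trans (Real.one_sub_le_exp_neg δ)
  have sum_le : ∑ k, ∏ _i : σ, (1 - μ.real (C k)) ≤ ε :=
    calc ∑ k, ∏ _i : σ, (1 - μ.real (C k))
        ≤ ∑ _k : κ, ∏ _i : σ, Real.exp (-δ) := by
          gcongr with k
          · exact fun i _ => sub_nonneg.2 measureReal_le_one
          · exact miss_le k
      _ = Fintype.card κ * Real.exp (-(Fintype.card σ * δ)) := by
          simp only [Finset.prod_const, Finset.sum_const, Finset.card_univ, nsmul_eq_mul,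
            ← Real.exp_nat_mul, mul_neg]
      _ ≤ ε := mul_exp_neg_le_of_log_div_le hε hσ
  exact (sub_le_sub_left sum_le 1).trans
    (one_sub_sum_prod_le_measureReal_pi_forall_exists_mem (fun _ => μ) fun k _ => hC k)

theorem one_sub_le_measureReal_pi_forall_exists_dist_le {X : Type*} [PseudoMetricSpace X]
    [MeasurableSpace X] (μ : Measure X) [IsProbabilityMeasure μ] {s : Set X} {C : κ → Set X}
    (hC : ∀ k, NullMeasurableSet (C k) μ) (hs : s ⊆ ⋃ k, C k) {r δ ε : ℝ}
    (hr : ∀ k, ∀ p ∈ C k, ∀ q ∈ C k, dist p q ≤ r) (hδ : ∀ k, δ ≤ μ.real (C k)) (hε : 0 < ε)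
    (hσ : Real.log (Fintype.card κ / ε) ≤ Fintype.card σ * δ) :
    1 - ε ≤ (Measure.pi fun _ : σ => μ).real {x | ∀ p ∈ s, ∃ i, dist p (x i) ≤ r} := by
  refine (one_sub_le_measureReal_pi_forall_exists_mem μ hC hδ hε hσ).trans
    (measureReal_mono fun x hx p hp => ?_)
  obtain ⟨k, hpk⟩ := Set.mem_iUnion.1 (hs hp)
  obtain ⟨i, hi⟩ := hx k
  exact ⟨i, hr k p hpk (x i) hi⟩

end Sampling

section Cube

variable {ι : Type*}

variable (ι) in
/-- The closed unit cube `[0,1]^ι` of Euclidean space; `unitSquare` is the case `ι = Fin 2`. -/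
def unitCube : Set (EuclideanSpace ℝ ι) :=
  {p | ∀ i, p i ∈ Set.Icc (0 : ℝ) 1}

/-- The cell with index `c` in the division of the unit cube into closed cubes of side `1 / b`.
Neighbouring cells share faces, which is harmless since they are only used as a cover. -/
def gridCell (b : ℕ) (c : ι → Fin b) : Set (EuclideanSpace ℝ ι) :=
  WithLp.ofLp ⁻¹' Set.Icc (fun i => (c i : ℝ) / b) (fun i => ((c i : ℝ) + 1) / b)

theorem unitCube_eq_preimage_Icc : unitCube ι = WithLp.ofLp ⁻¹' Set.Icc (0 : ι → ℝ) 1 := by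
  ext p
  simp [unitCube, Pi.le_def, forall_and]

theorem unitCube_subset_iUnion_gridCell {b : ℕ} (hb : 0 < b) :
    unitCube ι ⊆ ⋃ c : ι → Fin b, gridCell b c := by
  intro p hp
  choose c hc using fun i => exists_fin_mem_Icc_div hb (hp i)
  exact Set.mem_iUnion.2 ⟨c, fun i => (hc i).1, fun i => (hc i).2⟩

theorem gridCell_subset_unitCube {b : ℕ} (c : ι → Fin b) : gridCell b c ⊆ unitCube ι := by
  rw [unitCube_eq_preimage_Icc]
  refine Set.preimage_mono (Set.Icc_subset_Icc (fun i => ?_) fun i => ?_)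
  · exact div_nonneg (Nat.cast_nonneg _) (Nat.cast_nonneg _)
  · exact div_le_one_of_le₀ (mod_cast (c i).isLt) (Nat.cast_nonneg _)

theorem measurableSet_gridCell [Countable ι] {b : ℕ} (c : ι → Fin b) :
    MeasurableSet (gridCell b c) :=
  measurableSet_Icc.preimage (WithLp.measurable_ofLp 2 (ι → ℝ))

variable [Fintype ι]

theorem dist_le_sqrt_card_mul_dist_ofLp (p q : EuclideanSpace ℝ ι) :
    dist p q ≤ √(Fintype.card ι) * dist p.ofLp q.ofLp := by
  simpa [Real.sqrt_eq_rpow] using (PiLp.antilipschitzWith_ofLp 2 fun _ : ι => ℝ).le_mul_dist p q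

theorem dist_le_of_mem_gridCell {b : ℕ} {c : ι → Fin b} {p q : EuclideanSpace ℝ ι}
    (hp : p ∈ gridCell b c) (hq : q ∈ gridCell b c) : dist p q ≤ √(Fintype.card ι) / b := by
  have dist_coord_le : dist p.ofLp q.ofLp ≤ 1 / b :=
    (Real.dist_le_of_mem_pi_Icc hp hq).trans <| (dist_pi_le_iff (by positivity)).2 fun i => by
      rw [dist_comm, Real.dist_eq, ← sub_div, add_sub_cancel_left, abs_of_nonneg (by positivity)]
  calc dist p q
      ≤ √(Fintype.card ι) * dist p.ofLp q.ofLp := dist_le_sqrt_card_mul_dist_ofLp p q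
    _ ≤ √(Fintype.card ι) * (1 / b) := by gcongr
    _ = √(Fintype.card ι) / b := mul_one_div _ _

theorem volume_real_preimage_ofLp_Icc {a b : ι → ℝ} (hab : a ≤ b) :
    volume.real (WithLp.ofLp ⁻¹' Set.Icc a b : Set (EuclideanSpace ℝ ι)) = ∏ i, (b i - a i) := by
  rw [(PiLp.volume_preserving_ofLp ι).measureReal_preimage measurableSet_Icc.nullMeasurableSet,
    measureReal_def, Real.volume_Icc_pi_toReal hab]

instance isProbabilityMeasure_restrict_unitCube :
    IsProbabilityMeasure (volume.restrict (unitCube ι)) := by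
  have volume_unitCube : volume.real (unitCube ι) = 1 := by
    rw [unitCube_eq_preimage_Icc, volume_real_preimage_ofLp_Icc zero_le_one]
    simp
  refine ⟨?_⟩
  rwa [Measure.restrict_apply_univ, ← ENNReal.toReal_eq_one_iff]

theorem measureReal_restrict_unitCube_gridCell {b : ℕ} (c : ι → Fin b) :
    (volume.restrict (unitCube ι)).real (gridCell b c) = ((b : ℝ) ^ Fintype.card ι)⁻¹ := by
  rw [measureReal_restrict_apply (measurableSet_gridCell c),
    Set.inter_eq_left.2 (gridCell_subset_unitCube c), gridCell,
    volume_real_preimage_ofLp_Icc fun i => by gcongr; exact le_add_of_nonneg_right zero_le_one]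
  simp [← sub_div]

end Cube

theorem stmt_13_general {ι : Type*} [Fintype ι] [Nonempty ι] {r ε : ℝ} (hr : 0 < r) (hε : 0 < ε)
    {n : ℕ} (hn : (⌈√(Fintype.card ι) / r⌉₊ : ℝ) ^ Fintype.card ι *
      Real.log ((⌈√(Fintype.card ι) / r⌉₊ : ℝ) ^ Fintype.card ι / ε) ≤ n) :
    ENNReal.ofReal (1 - ε) ≤
      (Measure.pi fun _ : Fin n => volume.restrict (unitCube ι))
        {x | ∀ p ∈ unitCube ι, ∃ i, ‖p - x i‖ ≤ r} := by
  classical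
  set b := ⌈√(Fintype.card ι) / r⌉₊
  have hb : 0 < b := Nat.ceil_pos.2 (by positivity)
  have diam_le : √(Fintype.card ι) / b ≤ r :=
    (div_le_comm₀ (by positivity) hr).2 (Nat.le_ceil _)
  have log_le : Real.log (Fintype.card (ι → Fin b) / ε) ≤
      Fintype.card (Fin n) * ((b : ℝ) ^ Fintype.card ι)⁻¹ := by
    rw [← div_eq_mul_inv, le_div_iff₀' (by positivity)]
    simpa using hn
  refine ENNReal.ofReal_le_of_le_toReal ?_
  simp only [← dist_eq_norm]
  exact one_sub_le_measureReal_pi_forall_exists_dist_le _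
    (fun c => (measurableSet_gridCell c).nullMeasurableSet) (unitCube_subset_iUnion_gridCell hb)
    (fun c p hp q hq => (dist_le_of_mem_gridCell hp hq).trans diam_le)
    (fun c => (measureReal_restrict_unitCube_gridCell c).ge) hε log_le

/-- let `x₁,…,x_n` be `n` i.i.d. uniform points in the unit square.  For
`r > 0`, `0 < ε < 1` and `b = ⌈√2/r⌉`, if `n ≥ b²·log(b²/ε)` then with probability at least
`1 − ε` every point of the unit square is within distance `r` of some `x_i`. -/
theorem stmt_13 (r ε : ℝ) (hr : 0 < r) (hε0 : 0 < ε) (hε1 : ε < 1) (n : ℕ)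
    (hn : (⌈Real.sqrt 2 / r⌉₊ : ℝ) ^ 2 * Real.log ((⌈Real.sqrt 2 / r⌉₊ : ℝ) ^ 2 / ε) ≤ (n : ℝ)) :
    ENNReal.ofReal (1 - ε) ≤
      (Measure.pi fun _ : Fin n => unifSquare)
        {x : Fin n → EuclideanSpace ℝ (Fin 2) |
          ∀ p ∈ unitSquare, ∃ i : Fin n, ‖p - x i‖ ≤ r} := by
  exact stmt_13_general (ι := Fin 2) hr hε0 (by simpa using hn)
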